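/- arXiv:2302.11331 — 2 statements merged into one kernel-verified Lean document; each statement's English description precedes it below -/
import Mathlib

section
/- Let q, D, N ≥ 1 and let γ_n (1 ≤ n ≤ N) be complex numbers. Then ∑_{d ~ D, (d,q)=1} ∑_{ν: ν²+1 ≡ 0 (mod d)} |∑_{n ≤ N} γ_n e(νn q̅/d)|² ≪ (qD + N) ∑_{n ≤ N} |γ_n|², where q̅ denotes the inverse of q modulo d and e(x) = e^{2πix}, and d ~ D means D < d ≤ 2D. -/
open scoped Real

/-- Discrete Parseval, as an inequality between partial sums. -/
lemma ls_parseval (M t : ℕ) (hM : 0 < M) (ht : t ≤ M) (γ : ℕ → ℂ) (ζ : ℂ)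
    (hζ : IsPrimitiveRoot ζ M) :
    ∑ k ∈ Finset.range M, ‖∑ n ∈ Finset.Icc 1 t, γ n * (ζ ^ k) ^ n‖ ^ 2 =
      M * ∑ n ∈ Finset.Icc 1 t, ‖γ n‖ ^ 2 := by
  have hnorm : ‖ζ‖ = 1 := hζ.norm'_eq_one hM.ne'
  have hz0 : ζ ≠ 0 := hζ.ne_zero hM.ne'
  have hconj : (starRingEnd ℂ) ζ = ζ⁻¹ := by
    rw [Complex.inv_def, Complex.normSq_eq_norm_sq, hnorm]; simp
  have key : ∀ n ∈ Finset.Icc 1 t, ∀ m ∈ Finset.Icc 1 t,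
      ∑ k ∈ Finset.range M, (ζ ^ k) ^ n * ((ζ⁻¹) ^ k) ^ m = if n = m then (M : ℂ) else 0 := by
    intro n hn m hm
    rw [Finset.mem_Icc] at hn hm
    have e : ∀ k ∈ Finset.range M, (ζ ^ k) ^ n * ((ζ⁻¹) ^ k) ^ m = (ζ ^ n * (ζ⁻¹) ^ m) ^ k := by
      intro k _
      rw [mul_pow, ← pow_mul, ← pow_mul, ← pow_mul, ← pow_mul, mul_comm k n, mul_comm k m]
    rw [Finset.sum_congr rfl e]
    split_ifs with h
    · subst h
      rw [← mul_pow, mul_inv_cancel₀ hz0]; simp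
    · have hw : ζ ^ n * (ζ⁻¹) ^ m ≠ 1 := by
        intro hh
        rw [inv_pow, mul_inv_eq_one₀ (pow_ne_zero _ hz0)] at hh
        have h2 : n ≡ m [MOD M] := by
          have hu : (hζ.isUnit hM.ne').unit ^ n = (hζ.isUnit hM.ne').unit ^ m := by
            ext; simpa using hh
          have := pow_eq_pow_iff_modEq.1 hu
          rwa [← orderOf_units, IsUnit.unit_spec, ← hζ.eq_orderOf] at this
        have h3 : (M : ℤ) ∣ (m : ℤ) - n := (Nat.modEq_iff_dvd.1 h2)
        apply h
        have := Int.eq_zero_of_abs_lt_dvd h3 (by rw [abs_lt]; constructor <;> omega)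
        omega
      have hp : (ζ ^ n * (ζ⁻¹) ^ m) ^ M = 1 := by
        rw [mul_pow, ← pow_mul, ← pow_mul, mul_comm n, mul_comm m, pow_mul, pow_mul, inv_pow,
          hζ.pow_eq_one]; simp
      have := mul_geom_sum (ζ ^ n * (ζ⁻¹) ^ m) M
      rw [hp, sub_self] at this
      exact (mul_eq_zero.1 this).resolve_left (sub_ne_zero.2 hw)
  have : ((∑ k ∈ Finset.range M, ‖∑ n ∈ Finset.Icc 1 t, γ n * (ζ ^ k) ^ n‖ ^ 2 : ℝ) : ℂ) =
      ((M * ∑ n ∈ Finset.Icc 1 t, ‖γ n‖ ^ 2 : ℝ) : ℂ) := by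
    push_cast
    simp_rw [← Complex.mul_conj', map_sum, map_mul, map_pow, hconj, Finset.sum_mul_sum]
    rw [Finset.sum_comm, Finset.mul_sum]
    refine Finset.sum_congr rfl fun n hn => ?_
    rw [Finset.sum_comm]
    have : ∀ m ∈ Finset.Icc 1 t, ∑ k ∈ Finset.range M,
        γ n * (ζ ^ k) ^ n * ((starRingEnd ℂ) (γ m) * ((ζ⁻¹) ^ k) ^ m) =
        γ n * (starRingEnd ℂ) (γ m) * (if n = m then (M : ℂ) else 0) := by
      intro m hm
      rw [← key n hn m hm, Finset.mul_sum]
      refine Finset.sum_congr rfl fun k _ => by ring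
    rw [Finset.sum_congr rfl this]
    simp only [mul_ite, mul_zero, Finset.sum_ite_eq, if_pos hn]
    ring
  exact_mod_cast this

/-- Abel summation. -/
lemma ls_abel (γ : ℕ → ℂ) (u v : ℂ) (N : ℕ) :
    ∑ n ∈ Finset.Icc 1 N, γ n * (u * v) ^ n =
      (∑ n ∈ Finset.Icc 1 N, γ n * u ^ n) * v ^ N +
      ∑ t ∈ Finset.range N, (∑ n ∈ Finset.Icc 1 t, γ n * u ^ n) * (v ^ t - v ^ (t + 1)) := by
  induction N with
  | zero => simp
  | succ N ih =>
    rw [Finset.sum_Icc_succ_top (by omega), ih, Finset.sum_range_succ,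
      Finset.sum_Icc_succ_top (by omega)]
    ring

lemma ls_abel_bound (γ : ℕ → ℂ) (u v : ℂ) (N : ℕ) (hv : ‖v‖ = 1) (ε : ℝ) (hε : ‖v - 1‖ ≤ ε) :
    ‖∑ n ∈ Finset.Icc 1 N, γ n * (u * v) ^ n‖ ^ 2 ≤
      2 * ‖∑ n ∈ Finset.Icc 1 N, γ n * u ^ n‖ ^ 2 +
      2 * ε ^ 2 * N * ∑ t ∈ Finset.range N, ‖∑ n ∈ Finset.Icc 1 t, γ n * u ^ n‖ ^ 2 := by
  rw [ls_abel]
  set T : ℕ → ℂ := fun t => ∑ n ∈ Finset.Icc 1 t, γ n * u ^ n with hT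
  have h0 : 0 ≤ ε := (norm_nonneg _).trans hε
  have h1 : ‖T N * v ^ N + ∑ t ∈ Finset.range N, T t * (v ^ t - v ^ (t + 1))‖ ≤
      ‖T N‖ + ε * ∑ t ∈ Finset.range N, ‖T t‖ := by
    refine (norm_add_le _ _).trans (add_le_add ?_ ?_)
    · rw [norm_mul, norm_pow, hv]; simp
    · refine (norm_sum_le _ _).trans ?_
      rw [Finset.mul_sum]
      refine Finset.sum_le_sum fun t _ => ?_
      have : v ^ t - v ^ (t + 1) = - (v ^ t * (v - 1)) := by ring
      rw [norm_mul, this, norm_neg, norm_mul, norm_pow, hv, one_pow, one_mul, mul_comm]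
      exact mul_le_mul_of_nonneg_right hε (norm_nonneg _)
  have h2 : (∑ t ∈ Finset.range N, ‖T t‖) ^ 2 ≤ N * ∑ t ∈ Finset.range N, ‖T t‖ ^ 2 := by
    simpa using sq_sum_le_card_mul_sum_sq (s := Finset.range N) (f := fun t => ‖T t‖)
  calc _ ≤ (‖T N‖ + ε * ∑ t ∈ Finset.range N, ‖T t‖) ^ 2 :=
        pow_le_pow_left₀ (norm_nonneg _) h1 2
    _ ≤ 2 * ‖T N‖ ^ 2 + 2 * ε ^ 2 * (∑ t ∈ Finset.range N, ‖T t‖) ^ 2 := by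
        nlinarith [sq_nonneg (‖T N‖ - ε * ∑ t ∈ Finset.range N, ‖T t‖)]
    _ ≤ _ := by
        have := mul_le_mul_of_nonneg_left h2 (by positivity : 0 ≤ 2 * ε ^ 2)
        simp only [hT] at this ⊢
        linarith

/-- Large sieve for points with bounded multiplicity in cells of length `1/M`. -/
lemma ls_sieve {ι : Type*} (J : Finset ι) (a d : ι → ℕ) (M N : ℕ) (hM : 0 < M) (hN : N ≤ M)
    (hd : ∀ j ∈ J, 0 < d j) (lab : ι → ℤ) (hlab : ∀ j ∈ J, lab j ∈ Finset.Icc (-4 : ℤ) 4)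
    (hinj : Set.InjOn (fun j => ((M * a j / d j) % M, lab j)) (J : Set ι)) (γ : ℕ → ℂ) :
    ∑ j ∈ J, ‖∑ n ∈ Finset.Icc 1 N, γ n *
      Complex.exp (2 * π * Complex.I * ((a j : ℂ) / (d j : ℂ))) ^ n‖ ^ 2 ≤
      9 * (2 + 8 * π ^ 2) * M * ∑ n ∈ Finset.Icc 1 N, ‖γ n‖ ^ 2 := by
  set ζ : ℂ := Complex.exp (2 * π * Complex.I / M) with hζd
  have hζ : IsPrimitiveRoot ζ M := Complex.isPrimitiveRoot_exp M hM.ne'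
  have hMR : (0 : ℝ) < M := by exact_mod_cast hM
  have hMC : (M : ℂ) ≠ 0 := by exact_mod_cast hM.ne'
  set F : ℕ → ℝ := fun k => 2 * ‖∑ n ∈ Finset.Icc 1 N, γ n * (ζ ^ k) ^ n‖ ^ 2 +
      2 * (2 * π / M) ^ 2 * N *
        ∑ t ∈ Finset.range N, ‖∑ n ∈ Finset.Icc 1 t, γ n * (ζ ^ k) ^ n‖ ^ 2 with hF
  have hF0 : ∀ k, 0 ≤ F k := fun k => by positivity
  have step1 : ∀ j ∈ J, ‖∑ n ∈ Finset.Icc 1 N, γ n *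
      Complex.exp (2 * π * Complex.I * ((a j : ℂ) / (d j : ℂ))) ^ n‖ ^ 2 ≤
      F ((M * a j / d j) % M) := by
    intro j hj
    have hdj := hd j hj
    have hdR : (0 : ℝ) < d j := by exact_mod_cast hdj
    have hdC : (d j : ℂ) ≠ 0 := by exact_mod_cast hdj.ne'
    set k := M * a j / d j with hk
    set θ : ℝ := (a j : ℝ) / d j - k / M with hθ
    have hk1 : (k : ℝ) * d j ≤ M * a j := by
      exact_mod_cast Nat.div_mul_le_self (M * a j) (d j)
    have hk2 : (M : ℝ) * a j < (k + 1) * d j := by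
      have := Nat.lt_div_mul_add (a := M * a j) hdj
      rw [← hk] at this
      have h3 : M * a j < (k + 1) * d j := by rw [add_mul, one_mul]; exact this
      exact_mod_cast h3
    have hθ0 : 0 ≤ θ := by
      rw [hθ, sub_nonneg, div_le_div_iff₀ hMR hdR]; linarith
    have hθ1 : θ ≤ 1 / M := by
      rw [hθ, sub_le_iff_le_add, ← add_div, div_le_div_iff₀ hdR hMR]; linarith
    have hmod : ζ ^ (k % M) = ζ ^ k := by
      conv_rhs => rw [← Nat.mod_add_div k M, pow_add, pow_mul, hζ.pow_eq_one, one_pow, mul_one]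
    have hsplit : Complex.exp (2 * π * Complex.I * ((a j : ℂ) / (d j : ℂ))) =
        ζ ^ (k % M) * Complex.exp (Complex.I * ((2 * π * θ : ℝ) : ℂ)) := by
      rw [hmod, hζd, ← Complex.exp_nat_mul, ← Complex.exp_add]
      congr 1
      rw [hθ]; push_cast; field_simp; ring
    rw [hsplit]
    refine ls_abel_bound γ (ζ ^ (k % M)) _ N ?_ (2 * π / M) ?_
    · rw [mul_comm, Complex.norm_exp_ofReal_mul_I]
    · refine (Real.norm_exp_I_mul_ofReal_sub_one_le).trans ?_
      rw [Real.norm_eq_abs, abs_of_nonneg (by positivity)]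
      calc 2 * π * θ ≤ 2 * π * (1 / M) := by gcongr
        _ = _ := by ring
  have step2 : ∑ j ∈ J, F ((M * a j / d j) % M) ≤ 9 * ∑ k ∈ Finset.range M, F k := by
    calc ∑ j ∈ J, F ((M * a j / d j) % M)
        = ∑ p ∈ J.image (fun j => ((M * a j / d j) % M, lab j)), F p.1 := by
          rw [Finset.sum_image hinj]
      _ ≤ ∑ p ∈ Finset.range M ×ˢ Finset.Icc (-4 : ℤ) 4, F p.1 := by
          refine Finset.sum_le_sum_of_subset_of_nonneg ?_ fun p _ _ => hF0 _
          intro p hp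
          obtain ⟨j, hj, rfl⟩ := Finset.mem_image.1 hp
          exact Finset.mem_product.2 ⟨Finset.mem_range.2 (Nat.mod_lt _ hM), hlab j hj⟩
      _ = _ := by
          rw [Finset.sum_product, Finset.mul_sum]
          refine Finset.sum_congr rfl fun k _ => ?_
          simp
  set G := ∑ n ∈ Finset.Icc 1 N, ‖γ n‖ ^ 2 with hG
  have hG0 : 0 ≤ G := by positivity
  have step3 : ∑ k ∈ Finset.range M, F k ≤ (2 + 8 * π ^ 2) * M * G := by
    simp only [hF]
    rw [Finset.sum_add_distrib, ← Finset.mul_sum, ← Finset.mul_sum, ls_parseval M N hM hN γ ζ hζ,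
      Finset.sum_comm]
    have h4 : ∑ t ∈ Finset.range N, ∑ k ∈ Finset.range M,
        ‖∑ n ∈ Finset.Icc 1 t, γ n * (ζ ^ k) ^ n‖ ^ 2 ≤ N * (M * G) := by
      calc _ ≤ ∑ t ∈ Finset.range N, (M * G) := by
            refine Finset.sum_le_sum fun t ht => ?_
            have ht' := Finset.mem_range.1 ht
            rw [ls_parseval M t hM (by omega) γ ζ hζ]
            refine mul_le_mul_of_nonneg_left ?_ hMR.le
            exact Finset.sum_le_sum_of_subset_of_nonneg
              (Finset.Icc_subset_Icc_right ht'.le) fun _ _ _ => by positivity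
        _ = _ := by simp
    have h5 : 2 * (2 * π / M) ^ 2 * N * (N * (M * G)) ≤ 8 * π ^ 2 * (M * G) := by
      have h6 : ((N : ℝ) / M) ^ 2 ≤ 1 := by
        apply pow_le_one₀ (by positivity)
        rw [div_le_one hMR]; exact_mod_cast hN
      calc 2 * (2 * π / M) ^ 2 * N * (N * (M * G)) = (8 * π ^ 2 * (M * G)) * ((N : ℝ) / M) ^ 2 := by
            field_simp; ring
        _ ≤ _ := mul_le_of_le_one_right (by positivity) h6
    have h7 := mul_le_mul_of_nonneg_left h4
      (by positivity : 0 ≤ 2 * (2 * π / M) ^ 2 * (N : ℝ))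
    linarith
  calc _ ≤ ∑ j ∈ J, F ((M * a j / d j) % M) := Finset.sum_le_sum step1
    _ ≤ _ := step2
    _ ≤ 9 * ((2 + 8 * π ^ 2) * M * G) := by linarith
    _ = _ := by ring

/-- The lemma of Thue: a small solution of `x ≡ ν y (mod d)`. -/
lemma ls_thue (d : ℕ) (ν : ℤ) (hd : 0 < d) :
    ∃ x y : ℤ, (x ≠ 0 ∨ y ≠ 0) ∧ x ^ 2 ≤ d ∧ y ^ 2 ≤ d ∧ (d : ℤ) ∣ ν * y - x := by
  have : NeZero d := ⟨hd.ne'⟩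
  set k := Nat.sqrt d with hk
  have hk1 : k * k ≤ d := Nat.sqrt_le d
  have hk2 : d < (k + 1) * (k + 1) := Nat.lt_succ_sqrt d
  obtain ⟨p, hp, p', hp', hne, heq⟩ := Finset.exists_ne_map_eq_of_card_lt_of_maps_to
    (s := Finset.range (k + 1) ×ˢ Finset.range (k + 1)) (t := (Finset.univ : Finset (ZMod d)))
    (f := fun p => (((ν * (p.2 : ℤ) - (p.1 : ℤ) : ℤ)) : ZMod d))
    (by simpa [ZMod.card] using hk2) (by intro p _; simp)
  simp only [Finset.mem_product, Finset.mem_range] at hp hp'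
  have hk1' : (k : ℤ) * k ≤ d := by exact_mod_cast hk1
  refine ⟨(p.1 : ℤ) - p'.1, (p.2 : ℤ) - p'.2, ?_, ?_, ?_, ?_⟩
  · by_contra! hcon
    exact hne (Prod.ext (by omega) (by omega))
  · have : ((p.1 : ℤ) - p'.1) ^ 2 ≤ (k : ℤ) ^ 2 := sq_le_sq' (by omega) (by omega)
    nlinarith
  · have : ((p.2 : ℤ) - p'.2) ^ 2 ≤ (k : ℤ) ^ 2 := sq_le_sq' (by omega) (by omega)
    nlinarith
  · have h := (ZMod.intCast_eq_intCast_iff_dvd_sub _ _ d).1 heq.symm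
    convert h using 1
    ring

/-- Primitive representation attached to a root. -/
lemma ls_rep (d : ℕ) (ν : ℤ) (hd : 2 ≤ d) (hν : (d : ℤ) ∣ ν ^ 2 + 1) :
    ∃ r s : ℤ, 0 < s ∧ |r| ≤ s ∧ r ^ 2 + s ^ 2 = d ∧ IsCoprime r s ∧ (d : ℤ) ∣ ν * s - r := by
  have hd0 : (0 : ℤ) < d := by omega
  -- first a representation without normalisation
  obtain ⟨x, y, hne, hx, hy, hdv⟩ := ls_thue d ν (by omega)
  have hw : (d : ℤ) ∣ ν * x + y := by
    have : ν * x + y = (ν ^ 2 + 1) * y - ν * (ν * y - x) := by ring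
    rw [this]
    exact dvd_sub (hν.mul_right _) (hdv.mul_left _)
  have hsq : (d : ℤ) ∣ x ^ 2 + y ^ 2 := by
    have : x ^ 2 + y ^ 2 = y * (ν * x + y) - x * (ν * y - x) := by ring
    rw [this]
    exact dvd_sub (hw.mul_left _) (hdv.mul_left _)
  have hpos : 0 < x ^ 2 + y ^ 2 := by
    rcases hne with h | h
    · have := sq_pos_of_ne_zero h
      positivity
    · have := sq_pos_of_ne_zero h
      positivity
  have heq : x ^ 2 + y ^ 2 = d := by
    obtain ⟨c, hc⟩ := hsq
    have hc1 : 0 < c := by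
      by_contra! h
      nlinarith
    have hc2 : c ≤ 2 := by
      by_contra! h
      nlinarith
    interval_cases c
    · linarith
    · exfalso
      have hx' : x ^ 2 = d := by linarith
      have hy' : y ^ 2 = d := by linarith
      have hyx : y = x ∨ y = -x := sq_eq_sq_iff_eq_or_eq_neg.1 (hy'.trans hx'.symm)
      have hx0 : x ≠ 0 := by rintro rfl; simp at hx'; omega
      have h1 : x ∣ ν ^ 2 - 1 := by
        rw [← hx'] at hdv
        rcases hyx with rfl | rfl
        · have : y * y ∣ y * (ν - 1) := by
            convert hdv using 1 <;> ring
          have := (mul_dvd_mul_iff_left hx0).1 this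
          have h3 : ν ^ 2 - 1 = (ν - 1) * (ν + 1) := by ring
          rw [h3]; exact this.mul_right _
        · have : x * x ∣ x * (-(ν + 1)) := by
            convert hdv using 1 <;> ring
          have := (mul_dvd_mul_iff_left hx0).1 this
          have h3 : ν ^ 2 - 1 = -(ν + 1) * (-(ν - 1)) := by ring
          rw [h3]; exact this.mul_right _
      have h2 : x ∣ ν ^ 2 + 1 := (Dvd.intro _ (by rw [← hx']; ring : x * x = d)).trans hν
      have h3 : x ∣ 2 := by
        have := dvd_sub h2 h1
        ring_nf at this
        exact this
      have h4 : |x| ≤ 2 := Int.le_of_dvd (by norm_num) ((abs_dvd _ _).2 h3)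
      have h5 : -2 ≤ x ∧ x ≤ 2 := abs_le.1 h4
      have h6 : (d : ℤ) = 4 := by
        obtain ⟨h5, h5'⟩ := h5
        have h7 : (2 : ℤ) ≤ d := by exact_mod_cast hd
        rw [← hx'] at h7 ⊢
        clear hx' h1 h2 h3 hyx hc hdv hw hx hx0 h4 hpos hne hν
        interval_cases x <;> omega
      rw [h6] at hν
      have h8 : ν % 4 = 0 ∨ ν % 4 = 1 ∨ ν % 4 = 2 ∨ ν % 4 = 3 := by omega
      have h9 := Int.emod_eq_zero_of_dvd hν
      rcases h8 with h | h | h | h <;> simp [pow_two, Int.add_emod, Int.mul_emod, h] at h9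
  have hcop : IsCoprime x y := by
    obtain ⟨t, ht⟩ := hdv
    obtain ⟨w, hw⟩ := hw
    refine ⟨-t, w, ?_⟩
    have : (d : ℤ) * (-t * x + w * y) = d * 1 := by
      calc (d : ℤ) * (-t * x + w * y) = y * (d * w) - x * (d * t) := by ring
        _ = x ^ 2 + y ^ 2 := by rw [← ht, ← hw]; ring
        _ = d * 1 := by rw [heq]; ring
    exact mul_left_cancel₀ hd0.ne' this
  have main : ∀ r s : ℤ, |r| ≤ |s| → r ^ 2 + s ^ 2 = d → IsCoprime r s → (d : ℤ) ∣ ν * s - r →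
      ∃ r s : ℤ, 0 < s ∧ |r| ≤ s ∧ r ^ 2 + s ^ 2 = d ∧ IsCoprime r s ∧ (d : ℤ) ∣ ν * s - r := by
    intro r s h1 h2 h3 h4
    have hs0 : s ≠ 0 := by
      rintro rfl
      have : r = 0 := by simpa using h1
      subst this; simp at h2; omega
    rcases lt_or_gt_of_ne hs0 with hs | hs
    · refine ⟨-r, -s, by omega, ?_, by linarith [neg_sq r, neg_sq s], h3.neg_neg, ?_⟩
      · rw [abs_neg]; rwa [abs_of_neg hs] at h1
      · have : ν * -s - -r = -(ν * s - r) := by ring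
        rw [this]; exact (dvd_neg).2 h4
    · exact ⟨r, s, hs, by rwa [abs_of_pos hs] at h1, h2, h3, h4⟩
  rcases le_total |x| |y| with h | h
  · exact main x y h heq hcop hdv
  · refine main (-y) x (by rwa [abs_neg]) (by linarith [neg_sq y]) hcop.symm.neg_left ?_
    rwa [sub_neg_eq_add]

/-- The half-symmetric divisibility step. -/
lemma ls_dvd (s s' m m' z q r : ℤ) (h : m * s' - m' * s - z * (q * s * s') = 0)
    (hm : s ∣ 1 + r * m) : s ∣ s' := by
  have hc : IsCoprime s m := by
    obtain ⟨c, hc⟩ := hm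
    exact ⟨c, -r, by linarith⟩
  refine hc.dvd_of_dvd_mul_left (?_ : s ∣ m * s')
  exact ⟨m' + z * q * s', by linarith⟩

lemma ls_m (q s a r m d : ℤ) (hd : r ^ 2 + s ^ 2 = d) (hc : IsCoprime r s)
    (h : q * s * a = r + d * m) : s ∣ 1 + r * m := by
  refine hc.symm.dvd_of_dvd_mul_left (?_ : s ∣ r * (1 + r * m))
  exact ⟨q * a - s * m, by rw [← hd] at h; linarith⟩

set_option maxHeartbeats 2000000 in
/-- Injectivity core. -/
lemma ls_inj (q D M : ℕ) (hq : 1 ≤ q) (hD : 1 ≤ D) (hM : 4 * (q * D) ≤ M)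
    (a d a' d' : ℕ) (r s r' s' : ℤ)
    (hd : D < d) (hd2 : d ≤ 2 * D) (hd' : D < d') (hd2' : d' ≤ 2 * D)
    (hs : 0 < s) (hrs : |r| ≤ s) (hrep : r ^ 2 + s ^ 2 = d) (hcop : IsCoprime r s)
    (hs' : 0 < s') (hrs' : |r'| ≤ s') (hrep' : r' ^ 2 + s' ^ 2 = d') (hcop' : IsCoprime r' s')
    (ha : (d : ℤ) ∣ q * s * a - r) (ha' : (d' : ℤ) ∣ q * s' * a' - r')
    (hk : (M * a / d) % M = (M * a' / d') % M)
    (hl : ⌊(4 * r * D : ℝ) / (s * d)⌋ = ⌊(4 * r' * D : ℝ) / (s' * d')⌋) :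
    r = r' ∧ s = s' := by
  obtain ⟨m, hm⟩ := ha
  obtain ⟨m', hm'⟩ := ha'
  have hmm := ls_m q s a r m d hrep hcop (by linarith)
  have hmm' := ls_m q s' a' r' m' d' hrep' hcop' (by linarith)
  have hqR : (0 : ℝ) < q := by exact_mod_cast hq
  have hDR : (0 : ℝ) < D := by exact_mod_cast hD
  have hdR : (0 : ℝ) < d := by exact_mod_cast (by omega : 0 < d)
  have hdR' : (0 : ℝ) < d' := by exact_mod_cast (by omega : 0 < d')
  have hsR : (0 : ℝ) < s := by exact_mod_cast hs
  have hsR' : (0 : ℝ) < s' := by exact_mod_cast hs'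
  have hM' : (4 * (q * D) : ℝ) ≤ M := by exact_mod_cast hM
  have hMR : (0 : ℝ) < M := lt_of_lt_of_le (by positivity) hM'
  have cell : ∀ a d : ℕ, 0 < d → 0 ≤ (a : ℝ) / d - ((M * a / d : ℕ) : ℝ) / M ∧
      (a : ℝ) / d - ((M * a / d : ℕ) : ℝ) / M < 1 / M := by
    intro a d hd
    have hdR : (0 : ℝ) < d := by exact_mod_cast hd
    have hk1 : ((M * a / d : ℕ) : ℝ) * d ≤ M * a := by
      exact_mod_cast Nat.div_mul_le_self (M * a) d
    have hk2 : (M : ℝ) * a < ((M * a / d : ℕ) + 1) * d := by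
      have := Nat.lt_div_mul_add (a := M * a) hd
      have h3 : M * a < (M * a / d + 1) * d := by rw [add_mul, one_mul]; exact this
      exact_mod_cast h3
    constructor
    · rw [sub_nonneg, div_le_div_iff₀ hMR hdR]; linarith
    · rw [sub_lt_iff_lt_add, ← add_div, div_lt_div_iff₀ hdR hMR]; linarith
  obtain ⟨c1, c2⟩ := cell a d (by omega)
  obtain ⟨c1', c2'⟩ := cell a' d' (by omega)
  set k := M * a / d
  set k' := M * a' / d'
  obtain ⟨z, hz⟩ : ∃ z : ℤ, (k : ℤ) - k' = M * z := by
    have : k' ≡ k [MOD M] := hk.symm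
    exact Nat.modEq_iff_dvd.1 this
  have hzR : (k : ℝ) / M - k' / M = z := by
    have : (k : ℝ) - k' = M * z := by exact_mod_cast hz
    rw [← sub_div, this]; field_simp
  have e1 : (a : ℝ) / d = (r : ℝ) / (q * s * d) + m / (q * s) := by
    have : (q : ℝ) * s * a - r = d * m := by exact_mod_cast hm
    field_simp; linarith
  have e1' : (a' : ℝ) / d' = (r' : ℝ) / (q * s' * d') + m' / (q * s') := by
    have : (q : ℝ) * s' * a' - r' = d' * m' := by exact_mod_cast hm'
    field_simp; linarith
  have hfl := Int.abs_sub_lt_one_of_floor_eq_floor hl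
  have e2 : (4 * r * D : ℝ) / (s * d) = 4 * (q * D) * ((r : ℝ) / (q * s * d)) := by
    field_simp
  have e2' : (4 * r' * D : ℝ) / (s' * d') = 4 * (q * D) * ((r' : ℝ) / (q * s' * d')) := by
    field_simp
  have hQ : (0 : ℝ) < 4 * (q * D) := by positivity
  have hfl2 : |(r : ℝ) / (q * s * d) - r' / (q * s' * d')| < 1 / (4 * (q * D)) := by
    rw [e2, e2', ← mul_sub, abs_mul, abs_of_pos hQ] at hfl
    rw [lt_div_iff₀ hQ]; linarith
  have hMi : (1 : ℝ) / M ≤ 1 / (4 * (q * D)) := one_div_le_one_div_of_le hQ hM'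
  have hdiff : |(m : ℝ) / (q * s) - m' / (q * s') - z| < 2 * (1 / (4 * (q * D))) := by
    rw [abs_lt] at hfl2 ⊢
    constructor <;> linarith
  have hss : (s : ℝ) * s' ≤ 2 * D := by
    have h1 : s ^ 2 ≤ 2 * D := by nlinarith [sq_nonneg r]
    have h2 : s' ^ 2 ≤ 2 * D := by nlinarith [sq_nonneg r']
    have h3 : s * s' ≤ 2 * D := by nlinarith [sq_nonneg (s - s')]
    exact_mod_cast h3
  have hzero : m * s' - m' * s - z * (q * s * s') = 0 := by
    have h1 : ((m * s' - m' * s - z * (q * s * s') : ℤ) : ℝ) =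
        (q * s * s') * ((m : ℝ) / (q * s) - m' / (q * s') - z) := by
      push_cast; field_simp
    have h2 : |((m * s' - m' * s - z * (q * s * s') : ℤ) : ℝ)| < 1 := by
      rw [h1, abs_mul, abs_of_pos (by positivity)]
      calc _ < (q * s * s' : ℝ) * (2 * (1 / (4 * (q * D)))) :=
            mul_lt_mul_of_pos_left hdiff (by positivity)
        _ = (s * s') / (2 * D) := by field_simp; ring
        _ ≤ 1 := by rw [div_le_one (by positivity)]; exact hss
    exact Int.abs_lt_one_iff.1 (by exact_mod_cast h2)
  have hs1 : s ∣ s' := ls_dvd s s' m m' z q r hzero hmm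
  have hs2 : s' ∣ s := ls_dvd s' s m' m (-z) q r' (by linarith) hmm'
  have hseq : s = s' := Int.dvd_antisymm hs.le hs'.le hs1 hs2
  subst hseq
  refine ⟨?_, rfl⟩
  have hmeq : m - m' = z * q * s := by
    have : s * (m - m' - z * q * s) = s * 0 := by linarith
    have := mul_left_cancel₀ hs.ne' this
    linarith
  have hdr : s ∣ r - r' := by
    have hc : IsCoprime s m := by
      obtain ⟨c, hc⟩ := hmm
      exact ⟨c, -r, by linarith⟩
    refine hc.dvd_of_dvd_mul_left (?_ : s ∣ m * (r - r'))
    have : m * (r - r') = (1 + r * m) - (1 + r' * m') - s * (r' * (z * q)) := by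
      have : m' = m - z * q * s := by linarith
      rw [this]; ring
    rw [this]
    exact dvd_sub (dvd_sub hmm hmm') (dvd_mul_right _ _)
  have nz : ∀ (r : ℤ) (d : ℕ), D < d → r ^ 2 + s ^ 2 = d → IsCoprime r s → r ≠ 0 := by
    rintro r d h1 h2 h3 rfl
    have : IsUnit s := isCoprime_zero_left.1 h3
    have h4 : s ^ 2 = 1 := by
      rcases Int.isUnit_iff.1 this with h | h <;> rw [h] <;> rfl
    rw [h4] at h2
    clear hl hk hfl hfl2 hdiff e1 e1' e2 e2' hzero hrep hrep'
    omega
  have hr0 := nz r d hd hrep hcop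
  have hr0' := nz r' d' hd' hrep' hcop'
  have sg : ∀ (r : ℤ) (d : ℕ), 0 < d → (0 ≤ ⌊(4 * r * D : ℝ) / (s * d)⌋ ↔ 0 ≤ r) := by
    intro r d hd
    have hdR : (0 : ℝ) < d := by exact_mod_cast hd
    rw [Int.floor_nonneg, le_div_iff₀ (by positivity), zero_mul,
      mul_nonneg_iff_of_pos_right hDR, mul_nonneg_iff_of_pos_left (by norm_num)]
    exact Int.cast_nonneg_iff
  have h1 := sg r d (by omega)
  have h2 := sg r' d' (by omega)
  rw [hl] at h1
  have h3 : 0 ≤ r ↔ 0 ≤ r' := h1.symm.trans h2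
  rw [abs_le] at hrs hrs'
  have := Int.eq_zero_of_abs_lt_dvd hdr (by rw [abs_lt]; constructor <;> omega)
  omega

/-- Large sieve for roots of the quadratic congruence `ν² + 1 ≡ 0 (mod d)`, twisted by
the inverse of `q` mod `d`: for `q, D, N ≥ 1` and complex numbers `γ_n`,
`∑_{D < d ≤ 2D, (d,q)=1} ∑_{ν² + 1 ≡ 0 (d)} |∑_{n ≤ N} γ_n e_d(ν n q̄)|²
  ≪ (qD + N) ∑_{n ≤ N} |γ_n|²`, with an absolute implied constant. -/
theorem stmt_10 :
    ∃ C : ℝ, 0 < C ∧ ∀ (q D N : ℕ), 1 ≤ q → 1 ≤ D → 1 ≤ N → ∀ γ : ℕ → ℂ,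
      ∑ d ∈ (Finset.Ioc D (2 * D)).filter (fun d => Nat.Coprime d q),
        ∑ ν ∈ (Finset.range d).filter (fun ν => (ν ^ 2 + 1) % d = 0),
          ‖∑ n ∈ Finset.Icc 1 N, γ n *
              Complex.exp (2 * π * Complex.I *
                ((ν * n * (ZMod.val ((q : ZMod d)⁻¹)) : ℕ) : ℂ) / (d : ℂ))‖ ^ 2 ≤
        C * ((q * D : ℕ) + N) * ∑ n ∈ Finset.Icc 1 N, ‖γ n‖ ^ 2 := by

  classical
  refine ⟨36 * (2 + 8 * π ^ 2), by positivity, ?_⟩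
  intro q D N hq hD hN γ
  set J : Finset (Σ _ : ℕ, ℕ) :=
    ((Finset.Ioc D (2 * D)).filter (fun d => Nat.Coprime d q)).sigma
      (fun d => (Finset.range d).filter (fun ν => (ν ^ 2 + 1) % d = 0)) with hJ
  have hmem : ∀ j ∈ J, D < j.1 ∧ j.1 ≤ 2 * D ∧ Nat.Coprime j.1 q ∧ j.2 < j.1 ∧
      (j.1 : ℤ) ∣ (j.2 : ℤ) ^ 2 + 1 := by
    intro j hj
    simp only [hJ, Finset.mem_sigma, Finset.mem_filter, Finset.mem_Ioc, Finset.mem_range] at hj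
    refine ⟨hj.1.1.1, hj.1.1.2, hj.1.2, hj.2.1, ?_⟩
    exact_mod_cast Nat.dvd_of_mod_eq_zero hj.2.2
  have hrep : ∀ j : (Σ _ : ℕ, ℕ), ∃ p : ℤ × ℤ, j ∈ J → (0 < p.2 ∧ |p.1| ≤ p.2 ∧
      p.1 ^ 2 + p.2 ^ 2 = j.1 ∧ IsCoprime p.1 p.2 ∧ (j.1 : ℤ) ∣ (j.2 : ℤ) * p.2 - p.1) := by
    intro j
    by_cases hj : j ∈ J
    · obtain ⟨h1, h2, h3, h4, h5⟩ := hmem j hj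
      obtain ⟨r, s, h⟩ := ls_rep j.1 j.2 (by omega) h5
      exact ⟨(r, s), fun _ => h⟩
    · exact ⟨0, fun h => absurd h hj⟩
  choose p hp using hrep
  set a : (Σ _ : ℕ, ℕ) → ℕ := fun j => j.2 * ZMod.val ((q : ZMod j.1)⁻¹) with ha
  have hadvd : ∀ j ∈ J, (j.1 : ℤ) ∣ q * (p j).2 * (a j : ℕ) - (p j).1 := by
    intro j hj
    obtain ⟨h1, h2, h3, h4, h5⟩ := hmem j hj
    obtain ⟨g1, g2, g3, g4, g5⟩ := hp j hj
    have : NeZero j.1 := ⟨by omega⟩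
    rw [← ZMod.intCast_zmod_eq_zero_iff_dvd] at g5 ⊢
    have hinv : (q : ZMod j.1) * (q : ZMod j.1)⁻¹ = 1 := ZMod.coe_mul_inv_eq_one q h3.symm
    simp only [ha]
    push_cast at g5 ⊢
    rw [ZMod.natCast_zmod_val]
    linear_combination g5 + (j.2 : ZMod j.1) * ((p j).2 : ZMod j.1) * hinv
  set lab : (Σ _ : ℕ, ℕ) → ℤ :=
    fun j => ⌊(4 * (p j).1 * D : ℝ) / ((p j).2 * j.1)⌋ with hlabd
  have hlab : ∀ j ∈ J, lab j ∈ Finset.Icc (-4 : ℤ) 4 := by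
    intro j hj
    obtain ⟨h1, h2, h3, h4, h5⟩ := hmem j hj
    obtain ⟨g1, g2, g3, g4, g5⟩ := hp j hj
    have hD0 : (0 : ℝ) < D := by exact_mod_cast hD
    have hs0 : (0 : ℝ) < (p j).2 := by exact_mod_cast g1
    have hd1 : (D : ℝ) ≤ j.1 := by exact_mod_cast h1.le
    have hd0 : (0 : ℝ) < j.1 := hD0.trans_le hd1
    have hr : |((p j).1 : ℝ)| ≤ (p j).2 := by exact_mod_cast g2
    have hb : |((p j).1 * D : ℝ)| ≤ (p j).2 * j.1 := by
      rw [abs_mul, abs_of_pos hD0]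
      exact mul_le_mul hr hd1 hD0.le hs0.le
    rw [abs_le] at hb
    rw [Finset.mem_Icc, hlabd]
    have hpos : (0 : ℝ) < (p j).2 * j.1 := by positivity
    constructor
    · rw [Int.le_floor, le_div_iff₀ hpos]; push_cast; linarith
    · have : (4 * (p j).1 * D : ℝ) / ((p j).2 * j.1) ≤ ((4 : ℤ) : ℝ) := by
        rw [div_le_iff₀ hpos]; push_cast; linarith
      exact_mod_cast (Int.floor_le _).trans this
  have hsv := ls_sieve J a (fun j => j.1) (4 * (q * D + N)) N (by omega) (by omega)
    (fun j hj => by have := (hmem j hj).1; omega) lab hlab (by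
      intro j hj j' hj' heq
      simp only [Prod.mk.injEq] at heq
      have hj := Finset.mem_coe.1 hj
      have hj' := Finset.mem_coe.1 hj'
      obtain ⟨h1, h2, h3, h4, h5⟩ := hmem j hj
      obtain ⟨g1, g2, g3, g4, g5⟩ := hp j hj
      obtain ⟨h1', h2', h3', h4', h5'⟩ := hmem j' hj'
      obtain ⟨g1', g2', g3', g4', g5'⟩ := hp j' hj'
      obtain ⟨hr, hs⟩ := ls_inj q D (4 * (q * D + N)) hq hD (by omega) (a j) j.1 (a j') j'.1
        (p j).1 (p j).2 (p j').1 (p j').2 h1 h2 h1' h2' g1 g2 g3 g4 g1' g2' g3' g4'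
        (hadvd j hj) (hadvd j' hj') heq.1 heq.2
      have hdd : j.1 = j'.1 := by
        rw [← hr, ← hs, g3] at g3'
        exact_mod_cast g3'
      rw [← hr, ← hs, ← hdd] at g5'
      have hdiv : (j.1 : ℤ) ∣ (p j).2 * ((j.2 : ℤ) - j'.2) := by
        have e : (p j).2 * ((j.2 : ℤ) - j'.2) =
            ((j.2 : ℤ) * (p j).2 - (p j).1) - ((j'.2 : ℤ) * (p j).2 - (p j).1) := by ring
        rw [e]
        exact dvd_sub g5 g5'
      have hcd : IsCoprime (j.1 : ℤ) (p j).2 := by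
        rw [← g3, pow_two (p j).2]
        exact (g4.pow_left (m := 2)).add_mul_right_left _
      have h6 := hcd.dvd_of_dvd_mul_left hdiv
      have h7 := Int.eq_zero_of_abs_lt_dvd h6 (by rw [abs_lt]; constructor <;> omega)
      exact Sigma.ext hdd (heq_of_eq (by omega))) γ
  rw [Finset.sum_sigma']
  refine le_trans (le_of_eq ?_) (hsv.trans (le_of_eq ?_))
  · refine Finset.sum_congr rfl fun j _ => ?_
    congr 2
    refine Finset.sum_congr rfl fun n _ => ?_
    rw [← Complex.exp_nat_mul]
    congr 2
    simp only [ha]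
    push_cast
    ring
  · push_cast; ring
end

section
/- Let D, N ≥ 1 and let γ_n (1 ≤ n ≤ N) be complex numbers. Then ∑_{d ≤ D} (d/φ(d)) ∑*_{χ mod d} |∑_{n ≤ N} γ_n χ(n)|² ≪ (D² + N) ∑_{n ≤ N} |γ_n|², where ∑* denotes summation over primitive Dirichlet characters modulo d. -/
open scoped Classical

/-- The additive character `e(x) = exp(2π i x)`. -/
noncomputable def lsE (x : ℝ) : ℂ := Complex.exp (2 * Real.pi * x * Complex.I)

lemma lsE_add (x y : ℝ) : lsE (x + y) = lsE x * lsE y := by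
  unfold lsE; rw [← Complex.exp_add]; congr 1; push_cast; ring

lemma lsE_norm (x : ℝ) : ‖lsE x‖ = 1 := by
  have := Complex.norm_exp_ofReal_mul_I (2 * Real.pi * x)
  unfold lsE; push_cast at this; exact this

lemma lsE_conj (x : ℝ) : (starRingEnd ℂ) (lsE x) = lsE (-x) := by
  unfold lsE; rw [← Complex.exp_conj]; congr 1
  have : (starRingEnd ℂ) 2 = 2 := Complex.conj_ofNat 2
  simp [this]

lemma lsE_int (m : ℤ) : lsE m = 1 := by
  unfold lsE
  rw [Complex.exp_eq_one_iff]
  exact ⟨m, by push_cast; ring⟩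

lemma lsE_zero : lsE 0 = 1 := by simpa using lsE_int 0

lemma lsE_nat_mul (j : ℕ) (x : ℝ) : lsE (j * x) = lsE x ^ j := by
  unfold lsE; rw [← Complex.exp_nat_mul]; congr 1; push_cast; ring

lemma lsE_sub_one (x : ℝ) : ‖lsE x - 1‖ = 2 * |Real.sin (Real.pi * x)| := by
  have := Complex.norm_exp_I_mul_ofReal_sub_one (2 * Real.pi * x)
  unfold lsE
  rw [show (2 * Real.pi * x * Complex.I : ℂ) = Complex.I * ((2 * Real.pi * x : ℝ) : ℂ) by
    push_cast; ring, this]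
  rw [show 2 * Real.pi * x / 2 = Real.pi * x by ring, norm_mul]
  simp

/-- Geometric sum. -/
noncomputable def lsK (L : ℕ) (x : ℝ) : ℂ := ∑ j ∈ Finset.range L, lsE (j * x)

lemma lsK_trivial (L : ℕ) (x : ℝ) : ‖lsK L x‖ ≤ L := by
  unfold lsK
  refine (norm_sum_le _ _).trans ?_
  simp [lsE_norm]

lemma lsK_sin (L : ℕ) (x : ℝ) : ‖lsK L x‖ * |Real.sin (Real.pi * x)| ≤ 1 := by
  have h : lsK L x * (lsE x - 1) = lsE x ^ L - 1 := by
    unfold lsK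
    simp_rw [lsE_nat_mul]
    exact geom_sum_mul _ _
  have h2 : ‖lsK L x‖ * ‖lsE x - 1‖ ≤ 2 := by
    rw [← norm_mul, h]
    refine (norm_sub_le _ _).trans ?_
    rw [norm_pow, lsE_norm]; norm_num
  rw [lsE_sub_one] at h2
  linarith

lemma lsK_fract (L : ℕ) (x : ℝ) : lsK L (Int.fract x) = lsK L x := by
  unfold lsK
  refine Finset.sum_congr rfl fun j _ => ?_
  conv_rhs => rw [← Int.floor_add_fract x, mul_add, lsE_add]
  have : ((j : ℝ) * (⌊x⌋ : ℝ)) = (((j : ℤ) * ⌊x⌋ : ℤ) : ℝ) := by push_cast; rfl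
  rw [this, lsE_int, one_mul]

lemma lsK_aux (M Q k : ℕ) (hQM : Q ≤ M) (x t : ℝ) (ht : 2 * t ≤ |Real.sin (Real.pi * x)|)
    (hk : (k : ℝ) ≤ Q * t) : ‖lsK (2 * M) x‖ ^ 2 ≤ 4 * (M : ℝ) ^ 2 * (1 / ((k : ℝ) + 1) ^ 2) := by
  have hQM' : (Q : ℝ) ≤ M := by exact_mod_cast hQM
  have hM0 : (0 : ℝ) ≤ M := by positivity
  have key : ‖lsK (2 * M) x‖ * (k + 1) ≤ 2 * M := by
    rcases Nat.eq_zero_or_pos k with h0 | hpos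
    · subst h0
      have := lsK_trivial (2 * M) x
      push_cast at this ⊢
      linarith
    · have hk1 : (1 : ℝ) ≤ k := by exact_mod_cast hpos
      have hs := lsK_sin (2 * M) x
      have hn := norm_nonneg (lsK (2 * M) x)
      have h1 : ‖lsK (2 * M) x‖ * (2 * t) ≤ 1 :=
        (mul_le_mul_of_nonneg_left ht hn).trans hs
      have h2 : ‖lsK (2 * M) x‖ * k ≤ ‖lsK (2 * M) x‖ * (Q * t) :=
        mul_le_mul_of_nonneg_left hk hn
      have h3 : ‖lsK (2 * M) x‖ * (Q * t) * 2 ≤ Q := by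
        have : (0 : ℝ) ≤ Q := by positivity
        nlinarith
      nlinarith
  have hk0 : (0 : ℝ) < (k : ℝ) + 1 := by positivity
  rw [mul_one_div, le_div_iff₀ (by positivity), ← mul_pow]
  calc (‖lsK (2 * M) x‖ * (k + 1)) ^ 2 ≤ (2 * M) ^ 2 := by gcongr
    _ = _ := by ring

lemma lsK_bound (M Q : ℕ) (hQ : 1 ≤ Q) (hQM : Q ≤ M) (x : ℝ) :
    ‖lsK (2 * M) x‖ ^ 2 ≤ 4 * (M : ℝ) ^ 2 * (1 / ((⌊Q * Int.fract x⌋₊ : ℝ) + 1) ^ 2)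
      + 4 * (M : ℝ) ^ 2 * (1 / (((Q - 1 - ⌊Q * Int.fract x⌋₊ : ℕ) : ℝ) + 1) ^ 2) := by
  rw [← lsK_fract]
  set f := Int.fract x with hf
  have f0 : 0 ≤ f := Int.fract_nonneg x
  have f1 : f < 1 := Int.fract_lt_one x
  have hQ0 : (0 : ℝ) < Q := by exact_mod_cast hQ
  have hpi := Real.pi_pos
  rcases le_total f (1 / 2) with h | h
  · have := lsK_aux M Q ⌊Q * f⌋₊ hQM f f (by
      have := Real.mul_le_sin (x := Real.pi * f) (by positivity) (by nlinarith)
      have e : 2 / Real.pi * (Real.pi * f) = 2 * f := by field_simp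
      rw [e] at this
      exact this.trans (le_abs_self _)) (Nat.floor_le (by positivity))
    refine this.trans (le_add_of_nonneg_right (by positivity))
  · have := lsK_aux M Q (Q - 1 - ⌊Q * f⌋₊) hQM f (1 - f) (by
      have := Real.mul_le_sin (x := Real.pi * (1 - f))
        (mul_nonneg hpi.le (by linarith)) (by nlinarith)
      have e : 2 / Real.pi * (Real.pi * (1 - f)) = 2 * (1 - f) := by field_simp
      rw [e, show Real.pi * (1 - f) = Real.pi - Real.pi * f by ring, Real.sin_pi_sub] at this
      exact this.trans (le_abs_self _)) (by
      have h1 := Nat.lt_floor_add_one (Q * f)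
      have h2 : ⌊Q * f⌋₊ < Q := by
        rw [Nat.floor_lt (by positivity)]
        nlinarith
      have h3 : Q - 1 - ⌊Q * f⌋₊ + 1 + ⌊Q * f⌋₊ = Q := by omega
      have h4 : ((Q - 1 - ⌊Q * f⌋₊ : ℕ) : ℝ) + 1 + (⌊Q * f⌋₊ : ℝ) = Q := by exact_mod_cast h3
      nlinarith)
    refine this.trans (le_add_of_nonneg_left (by positivity))

lemma ls_sum_sq (Q : ℕ) : ∑ k ∈ Finset.range Q, 1 / ((k : ℝ) + 1) ^ 2 ≤ 2 := by
  have h : ∀ Q : ℕ, ∑ k ∈ Finset.range (Q + 1), 1 / ((k : ℝ) + 1) ^ 2 ≤ 2 - 1 / ((Q : ℝ) + 1) := by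
    intro Q
    induction Q with
    | zero => norm_num
    | succ n ih =>
      rw [Finset.sum_range_succ]
      have : 1 / (((n + 1 : ℕ) : ℝ) + 1) ^ 2 ≤ 1 / ((n : ℝ) + 1) - 1 / (((n + 1 : ℕ) : ℝ) + 1) := by
        push_cast
        rw [div_sub_div _ _ (by positivity) (by positivity), div_le_div_iff₀ (by positivity) (by positivity)]
        have : (0 : ℝ) ≤ n := by positivity
        nlinarith
      linarith
  rcases Q with _ | Q
  · simp
  · refine (h Q).trans ?_
    have : 0 ≤ 1 / ((Q : ℝ) + 1) := by positivity
    linarith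

lemma ls_row {ι : Type*} (s : Finset ι) (x : ι → ℝ) (M Q : ℕ) (hQ : 1 ≤ Q) (hQM : Q ≤ M)
    (hsep : ∀ i ∈ s, ∀ j ∈ s, i ≠ j → ∀ m : ℤ, 1 / (Q : ℝ) ≤ |x i - x j - m|) (y : ℝ) :
    ∑ i ∈ s, ‖lsK (2 * M) (x i - y)‖ ^ 2 ≤ 16 * (M : ℝ) ^ 2 := by
  have hQ0 : (0 : ℝ) < Q := by exact_mod_cast hQ
  let H : ℕ → ℝ := fun k => 4 * (M : ℝ) ^ 2 * (1 / ((k : ℝ) + 1) ^ 2)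
      + 4 * (M : ℝ) ^ 2 * (1 / (((Q - 1 - k : ℕ) : ℝ) + 1) ^ 2)
  let κ : ι → ℕ := fun i => ⌊Q * Int.fract (x i - y)⌋₊
  have hlt : ∀ i, κ i < Q := by
    intro i
    have f0 := Int.fract_nonneg (x i - y)
    have f1 := Int.fract_lt_one (x i - y)
    simp only [κ]
    rw [Nat.floor_lt (by positivity)]
    nlinarith
  have hinj : Set.InjOn κ s := by
    intro i hi j hj hij
    by_contra hne
    have h := hsep i hi j hj hne (⌊x i - y⌋ - ⌊x j - y⌋)
    have e : x i - x j - ((⌊x i - y⌋ - ⌊x j - y⌋ : ℤ) : ℝ)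
        = Int.fract (x i - y) - Int.fract (x j - y) := by
      unfold Int.fract; push_cast; ring
    rw [e] at h
    have f0 := Int.fract_nonneg (x i - y)
    have g0 := Int.fract_nonneg (x j - y)
    have a1 := Nat.lt_floor_add_one (Q * Int.fract (x i - y))
    have a2 := Nat.floor_le (a := Q * Int.fract (x i - y)) (by positivity)
    have b1 := Nat.lt_floor_add_one (Q * Int.fract (x j - y))
    have b2 := Nat.floor_le (a := Q * Int.fract (x j - y)) (by positivity)
    have hij' : (⌊Q * Int.fract (x i - y)⌋₊ : ℝ) = ⌊Q * Int.fract (x j - y)⌋₊ := by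
      exact_mod_cast hij
    rw [div_le_iff₀ hQ0] at h
    have : |Int.fract (x i - y) - Int.fract (x j - y)| * Q
        = |Q * Int.fract (x i - y) - Q * Int.fract (x j - y)| := by
      rw [← mul_sub, abs_mul, abs_of_pos hQ0, mul_comm]
    rw [this] at h
    have : |Q * Int.fract (x i - y) - Q * Int.fract (x j - y)| < 1 := by
      rw [abs_lt]; constructor <;> linarith
    linarith
  calc ∑ i ∈ s, ‖lsK (2 * M) (x i - y)‖ ^ 2 ≤ ∑ i ∈ s, H (κ i) :=
        Finset.sum_le_sum fun i _ => lsK_bound M Q hQ hQM _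
    _ = ∑ k ∈ s.image κ, H k := (Finset.sum_image hinj).symm
    _ ≤ ∑ k ∈ Finset.range Q, H k := by
        refine Finset.sum_le_sum_of_subset_of_nonneg ?_ ?_
        · intro k hk
          obtain ⟨i, _, rfl⟩ := Finset.mem_image.1 hk
          exact Finset.mem_range.2 (hlt i)
        · intro k _ _
          simp only [H]; positivity
    _ = 8 * (M : ℝ) ^ 2 * ∑ k ∈ Finset.range Q, 1 / ((k : ℝ) + 1) ^ 2 := by
        simp only [H]
        rw [Finset.sum_add_distrib, ← Finset.mul_sum, ← Finset.mul_sum,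
          Finset.sum_range_reflect (fun k => 1 / ((k : ℝ) + 1) ^ 2) Q]
        ring
    _ ≤ 8 * (M : ℝ) ^ 2 * 2 := by
        gcongr; exact ls_sum_sq Q
    _ = _ := by ring

lemma ls_expand {ι : Type*} (s : Finset ι) (x : ι → ℝ) (c : ι → ℂ) (L : ℕ) :
    ((∑ p ∈ Finset.range L ×ˢ Finset.range L,
      ‖∑ i ∈ s, c i * lsE (((p.1 : ℝ) - p.2) * x i)‖ ^ 2 : ℝ) : ℂ)
    = ∑ i ∈ s, ∑ j ∈ s, c i * (starRingEnd ℂ) (c j) * ((‖lsK L (x i - x j)‖ ^ 2 : ℝ) : ℂ) := by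
  have hK : ∀ y : ℝ, ((‖lsK L y‖ ^ 2 : ℝ) : ℂ)
      = ∑ p ∈ Finset.range L ×ˢ Finset.range L, lsE (((p.1 : ℝ) - p.2) * y) := by
    intro y
    push_cast
    rw [← Complex.mul_conj']
    unfold lsK
    rw [map_sum, Finset.sum_mul_sum, Finset.sum_product]
    refine Finset.sum_congr rfl fun a _ => Finset.sum_congr rfl fun b _ => ?_
    rw [lsE_conj, ← lsE_add]; congr 1; ring
  simp_rw [hK, Finset.mul_sum]
  push_cast
  simp_rw [← Complex.mul_conj', map_sum, Finset.sum_mul_sum]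
  rw [Finset.sum_comm]
  refine Finset.sum_congr rfl fun i _ => ?_
  rw [Finset.sum_comm]
  refine Finset.sum_congr rfl fun j _ => Finset.sum_congr rfl fun p _ => ?_
  rw [map_mul, lsE_conj, show ((p.1 : ℝ) - p.2) * (x i - x j)
    = ((p.1 : ℝ) - p.2) * x i + -(((p.1 : ℝ) - p.2) * x j) by ring, lsE_add]
  ring

lemma lsK_symm (L : ℕ) (x y : ℝ) : ‖lsK L (x - y)‖ = ‖lsK L (y - x)‖ := by
  rw [← RCLike.norm_conj]
  congr 1
  unfold lsK
  rw [map_sum]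
  refine Finset.sum_congr rfl fun j _ => ?_
  rw [lsE_conj]; congr 1; ring

lemma ls_dual {ι : Type*} (s : Finset ι) (x : ι → ℝ) (M Q N : ℕ) (hQ : 1 ≤ Q) (hQM : Q ≤ M)
    (hNM : N ≤ M)
    (hsep : ∀ i ∈ s, ∀ j ∈ s, i ≠ j → ∀ m : ℤ, 1 / (Q : ℝ) ≤ |x i - x j - m|) (c : ι → ℂ) :
    ∑ n ∈ Finset.Icc 1 N, ‖∑ i ∈ s, c i * lsE (n * x i)‖ ^ 2
      ≤ 16 * (M : ℝ) * ∑ i ∈ s, ‖c i‖ ^ 2 := by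
  have hM : (0 : ℝ) < M := by exact_mod_cast (by omega : 0 < M)
  set B : ℝ := ∑ p ∈ Finset.range (2 * M) ×ˢ Finset.range (2 * M),
      ‖∑ i ∈ s, c i * lsE (((p.1 : ℝ) - p.2) * x i)‖ ^ 2 with hB
  have lower : M * ∑ n ∈ Finset.Icc 1 N, ‖∑ i ∈ s, c i * lsE (n * x i)‖ ^ 2 ≤ B := by
    have h1 : M * ∑ n ∈ Finset.Icc 1 N, ‖∑ i ∈ s, c i * lsE (n * x i)‖ ^ 2
        = ∑ q ∈ Finset.Icc 1 N ×ˢ Finset.range M, ‖∑ i ∈ s, c i * lsE (q.1 * x i)‖ ^ 2 := by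
      rw [Finset.sum_product]
      simp [Finset.mul_sum]
    let T : ℕ × ℕ → ℕ × ℕ := fun q => (q.2 + q.1, q.2)
    have hT : Set.InjOn T (Finset.Icc 1 N ×ˢ Finset.range M : Finset (ℕ × ℕ)) := by
      rintro ⟨a, b⟩ _ ⟨a', b'⟩ _ h
      simp only [T, Prod.mk.injEq] at h ⊢
      omega
    have h2 : ∑ q ∈ Finset.Icc 1 N ×ˢ Finset.range M, ‖∑ i ∈ s, c i * lsE (q.1 * x i)‖ ^ 2
        = ∑ p ∈ (Finset.Icc 1 N ×ˢ Finset.range M).image T,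
          ‖∑ i ∈ s, c i * lsE (((p.1 : ℝ) - p.2) * x i)‖ ^ 2 := by
      rw [Finset.sum_image hT]
      refine Finset.sum_congr rfl fun q _ => ?_
      simp [T]
    rw [h1, h2, hB]
    refine Finset.sum_le_sum_of_subset_of_nonneg ?_ (fun _ _ _ => by positivity)
    intro p hp
    obtain ⟨q, hq, rfl⟩ := Finset.mem_image.1 hp
    simp only [Finset.mem_product, Finset.mem_Icc, Finset.mem_range, T] at hq ⊢
    omega
  have upper : B ≤ 16 * (M : ℝ) ^ 2 * ∑ i ∈ s, ‖c i‖ ^ 2 := by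
    have hBn : B = ‖((B : ℝ) : ℂ)‖ := by
      rw [Complex.norm_real, Real.norm_of_nonneg]
      rw [hB]; positivity
    rw [hBn, hB, ls_expand]
    have row : ∀ j, ∑ i ∈ s, ‖lsK (2 * M) (x i - x j)‖ ^ 2 ≤ 16 * (M : ℝ) ^ 2 := fun j =>
      ls_row s x M Q hQ hQM hsep (x j)
    calc _ ≤ ∑ i ∈ s, ∑ j ∈ s, ‖c i‖ * ‖c j‖ * ‖lsK (2 * M) (x i - x j)‖ ^ 2 := by
          refine (norm_sum_le _ _).trans (Finset.sum_le_sum fun i _ => ?_)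
          refine (norm_sum_le _ _).trans (Finset.sum_le_sum fun j _ => ?_)
          rw [norm_mul, norm_mul, RCLike.norm_conj, Complex.norm_real, norm_pow, norm_norm]
      _ ≤ ∑ i ∈ s, ∑ j ∈ s, (‖c i‖ ^ 2 * ‖lsK (2 * M) (x i - x j)‖ ^ 2 / 2
            + ‖c j‖ ^ 2 * ‖lsK (2 * M) (x i - x j)‖ ^ 2 / 2) := by
          refine Finset.sum_le_sum fun i _ => Finset.sum_le_sum fun j _ => ?_
          have := mul_nonneg (sq_nonneg (‖c i‖ - ‖c j‖)) (sq_nonneg ‖lsK (2 * M) (x i - x j)‖)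
          nlinarith
      _ = ∑ j ∈ s, ‖c j‖ ^ 2 * ∑ i ∈ s, ‖lsK (2 * M) (x i - x j)‖ ^ 2 := by
          simp_rw [Finset.sum_add_distrib]
          rw [Finset.sum_comm (f := fun i j => ‖c j‖ ^ 2 * ‖lsK (2 * M) (x i - x j)‖ ^ 2 / 2),
            ← Finset.sum_add_distrib]
          refine Finset.sum_congr rfl fun j _ => ?_
          rw [← Finset.sum_add_distrib, Finset.mul_sum]
          refine Finset.sum_congr rfl fun i _ => ?_
          rw [lsK_symm (2 * M) (x j) (x i)]
          ring
      _ ≤ ∑ j ∈ s, ‖c j‖ ^ 2 * (16 * (M : ℝ) ^ 2) :=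
          Finset.sum_le_sum fun j _ => mul_le_mul_of_nonneg_left (row j) (by positivity)
      _ = _ := by rw [← Finset.sum_mul, mul_comm]
  have := lower.trans upper
  refine le_of_mul_le_mul_left (this.trans_eq ?_) hM
  ring

lemma ls_additive {ι : Type*} (s : Finset ι) (x : ι → ℝ) (M Q N : ℕ) (hQ : 1 ≤ Q) (hQM : Q ≤ M)
    (hNM : N ≤ M)
    (hsep : ∀ i ∈ s, ∀ j ∈ s, i ≠ j → ∀ m : ℤ, 1 / (Q : ℝ) ≤ |x i - x j - m|) (γ : ℕ → ℂ) :
    ∑ i ∈ s, ‖∑ n ∈ Finset.Icc 1 N, γ n * lsE (n * x i)‖ ^ 2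
      ≤ 16 * (M : ℝ) * ∑ n ∈ Finset.Icc 1 N, ‖γ n‖ ^ 2 := by
  set S : ι → ℂ := fun i => ∑ n ∈ Finset.Icc 1 N, γ n * lsE (n * x i) with hS
  set X : ℝ := ∑ i ∈ s, ‖S i‖ ^ 2 with hX
  set G : ℝ := ∑ n ∈ Finset.Icc 1 N, ‖γ n‖ ^ 2 with hG
  have hX0 : 0 ≤ X := by rw [hX]; positivity
  have hG0 : 0 ≤ G := by rw [hG]; positivity
  have hd := ls_dual s x M Q N hQ hQM hNM hsep (fun i => (starRingEnd ℂ) (S i))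
  simp only [RCLike.norm_conj] at hd
  rw [← hX] at hd
  have e : (X : ℂ) = ∑ n ∈ Finset.Icc 1 N, γ n *
      ∑ i ∈ s, (starRingEnd ℂ) (S i) * lsE (n * x i) := by
    rw [hX]
    push_cast
    simp_rw [← Complex.conj_mul', Finset.mul_sum]
    rw [Finset.sum_comm]
    refine Finset.sum_congr rfl fun i _ => ?_
    conv_lhs => rw [hS]
    simp only
    rw [Finset.mul_sum]
    refine Finset.sum_congr rfl fun n _ => ?_
    ring
  have h1 : X ≤ ∑ n ∈ Finset.Icc 1 N, ‖γ n‖ *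
      ‖∑ i ∈ s, (starRingEnd ℂ) (S i) * lsE (n * x i)‖ := by
    have : X = ‖(X : ℂ)‖ := by rw [Complex.norm_real, Real.norm_of_nonneg hX0]
    rw [this, e]
    refine (norm_sum_le _ _).trans (Finset.sum_le_sum fun n _ => ?_)
    rw [norm_mul]
  have h2 : X ^ 2 ≤ G * (16 * M * X) := by
    calc X ^ 2 ≤ _ := pow_le_pow_left₀ hX0 h1 2
      _ ≤ _ := Finset.sum_mul_sq_le_sq_mul_sq _ _ _
      _ ≤ _ := mul_le_mul_of_nonneg_left hd hG0
  rcases hX0.eq_or_lt with h0 | hpos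
  · rw [← h0]; positivity
  · refine le_of_mul_le_mul_right ?_ hpos
    nlinarith

lemma ls_gauss {d : ℕ} [NeZero d] (χ : DirichletCharacter ℂ d) (hχ : χ.IsPrimitive) :
    ‖gaussSum χ (ZMod.stdAddChar (N := d))‖ ^ 2 = d := by
  set e := ZMod.stdAddChar (N := d) with he
  have h : (starRingEnd ℂ) (gaussSum χ e) * gaussSum χ e = d := by
    have h1 : (starRingEnd ℂ) (gaussSum χ e) = gaussSum χ⁻¹ e⁻¹ := star_gaussSum_eq χ e
    rw [h1]
    conv_lhs => rw [gaussSum]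
    rw [Finset.sum_mul]
    have h2 : ∀ a : ZMod d, χ⁻¹ a * e⁻¹ a * gaussSum χ e
        = ∑ b, χ b * e (a * (b - 1)) := by
      intro a
      have := gaussSum_mulShift_of_isPrimitive e hχ a
      rw [mul_right_comm, ← this, gaussSum, Finset.sum_mul]
      refine Finset.sum_congr rfl fun b _ => ?_
      rw [AddChar.mulShift_apply, AddChar.inv_apply, mul_assoc, ← AddChar.map_add_eq_mul]
      congr 2; ring
    simp_rw [h2]
    rw [Finset.sum_comm]
    have h3 : ∀ b : ZMod d, ∑ a, χ b * e (a * (b - 1)) = if b = 1 then (d : ℂ) else 0 := by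
      intro b
      rw [← Finset.mul_sum, he, AddChar.sum_mulShift _ (ZMod.isPrimitive_stdAddChar d)]
      by_cases hb : b = 1
      · simp [hb, ZMod.card]
      · simp [hb, sub_eq_zero]
    simp_rw [h3]
    simp
  rw [Complex.conj_mul'] at h
  exact_mod_cast h

lemma ls_orth {d : ℕ} [NeZero d] (F : ZMod d → ℂ) :
    ∑ χ : DirichletCharacter ℂ d, ‖∑ a, χ⁻¹ a * F a‖ ^ 2
      = (Nat.totient d : ℝ) * ∑ a ∈ Finset.univ.filter (fun a : ZMod d => IsUnit a), ‖F a‖ ^ 2 := by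
  have h : ((∑ χ : DirichletCharacter ℂ d, ‖∑ a, χ⁻¹ a * F a‖ ^ 2 : ℝ) : ℂ)
      = (Nat.totient d : ℂ) *
        ∑ a ∈ Finset.univ.filter (fun a : ZMod d => IsUnit a), ((‖F a‖ ^ 2 : ℝ) : ℂ) := by
    have h0 : ∀ χ : DirichletCharacter ℂ d, ∑ a, χ⁻¹ a * F a
        = ∑ a ∈ Finset.univ.filter (fun a : ZMod d => IsUnit a), χ⁻¹ a * F a := by
      intro χ
      rw [Finset.sum_filter]
      refine Finset.sum_congr rfl fun a _ => ?_
      split_ifs with ha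
      · rfl
      · rw [MulChar.map_nonunit _ ha, zero_mul]
    push_cast
    simp_rw [← Complex.mul_conj', h0, map_sum, Finset.sum_mul_sum]
    rw [Finset.sum_comm, Finset.mul_sum]
    refine Finset.sum_congr rfl fun a ha => ?_
    have hau : IsUnit a := (Finset.mem_filter.1 ha).2
    rw [Finset.sum_comm]
    have h1 : ∀ b : ZMod d, ∑ χ : DirichletCharacter ℂ d,
        χ⁻¹ a * F a * (starRingEnd ℂ) (χ⁻¹ b * F b)
        = (if a = b then (d.totient : ℂ) else 0) * (F a * (starRingEnd ℂ) (F b)) := by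
      intro b
      rw [← DirichletCharacter.sum_char_inv_mul_char_eq ℂ hau b, Finset.sum_mul]
      refine Finset.sum_congr rfl fun χ _ => ?_
      have e1 : χ⁻¹ a = χ a⁻¹ := by
        have h2 : χ a⁻¹ * χ a = 1 := by
          rw [← map_mul, ZMod.inv_mul_of_unit a hau, map_one]
        rw [MulChar.inv_apply_eq_inv']
        exact (eq_inv_of_mul_eq_one_left h2).symm
      have e2 : (starRingEnd ℂ) (χ⁻¹ b) = χ b := by
        have := MulChar.star_apply' χ⁻¹ b
        rw [inv_inv] at this
        exact this
      rw [map_mul, e1, e2]; ring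
    simp_rw [h1]
    rw [Finset.sum_eq_single a]
    · simp
    · intro b _ hb; simp [Ne.symm hb]
    · intro h; exact absurd ha h
  exact_mod_cast h

lemma ls_char {d : ℕ} [NeZero d] (N : ℕ) (γ : ℕ → ℂ) :
    ((d : ℝ) / (Nat.totient d : ℝ)) *
        ∑ χ ∈ Finset.univ.filter (fun χ : DirichletCharacter ℂ d => χ.IsPrimitive),
          ‖∑ n ∈ Finset.Icc 1 N, γ n * χ (n : ZMod d)‖ ^ 2
    ≤ ∑ a ∈ Finset.univ.filter (fun a : ZMod d => IsUnit a),
        ‖∑ n ∈ Finset.Icc 1 N, γ n * ZMod.stdAddChar (a * (n : ZMod d))‖ ^ 2 := by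
  set F : ZMod d → ℂ := fun a => ∑ n ∈ Finset.Icc 1 N, γ n * ZMod.stdAddChar (a * (n : ZMod d))
    with hF
  have hφ : (0 : ℝ) < Nat.totient d := by
    exact_mod_cast Nat.totient_pos.2 (Nat.pos_of_ne_zero (NeZero.ne d))
  rw [div_mul_eq_mul_div, div_le_iff₀ hφ, mul_comm _ (Nat.totient d : ℝ), ← ls_orth F,
    Finset.mul_sum]
  refine le_trans (Finset.sum_le_sum (g := fun χ : DirichletCharacter ℂ d =>
    ‖∑ a, χ⁻¹ a * F a‖ ^ 2) ?_)
    (Finset.sum_le_sum_of_subset_of_nonneg (Finset.filter_subset _ _) (fun _ _ _ => by positivity))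
  intro χ hχ
  have hp : χ.IsPrimitive := (Finset.mem_filter.1 hχ).2
  have hp' : (χ⁻¹).IsPrimitive := by
    unfold DirichletCharacter.IsPrimitive at hp ⊢
    rw [DirichletCharacter.conductor_inv, hp]
  have e : (∑ n ∈ Finset.Icc 1 N, γ n * χ (n : ZMod d)) * gaussSum χ⁻¹ (ZMod.stdAddChar (N := d))
      = ∑ a, χ⁻¹ a * F a := by
    simp only [hF, Finset.mul_sum, Finset.sum_mul]
    rw [Finset.sum_comm]
    refine Finset.sum_congr rfl fun n _ => ?_
    have := gaussSum_mulShift_of_isPrimitive (ZMod.stdAddChar (N := d)) hp' (n : ZMod d)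
    rw [inv_inv] at this
    rw [mul_assoc, ← this, gaussSum, Finset.mul_sum]
    refine Finset.sum_congr rfl fun a _ => ?_
    rw [AddChar.mulShift_apply, mul_comm a]; ring
  rw [← e, norm_mul, mul_pow, ls_gauss _ hp', mul_comm]

lemma ls_std {d : ℕ} [NeZero d] (a n : ℕ) :
    ZMod.stdAddChar ((a : ZMod d) * (n : ZMod d)) = lsE (n * ((a : ℝ) / d)) := by
  have := ZMod.stdAddChar_coe (N := d) ((a : ℤ) * n)
  push_cast at this
  rw [this]
  unfold lsE
  congr 1; push_cast; ring

lemma ls_units_sum {d : ℕ} [NeZero d] (G : ZMod d → ℝ) :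
    ∑ a ∈ Finset.univ.filter (fun a : ZMod d => IsUnit a), G a
      = ∑ a ∈ (Finset.range d).filter (fun a => Nat.Coprime a d), G (a : ZMod d) := by
  refine Finset.sum_nbij' (fun a => a.val) (fun a => (a : ZMod d)) ?_ ?_ ?_ ?_ ?_
  · intro a ha
    have hu : IsUnit a := (Finset.mem_filter.1 ha).2
    refine Finset.mem_filter.2 ⟨Finset.mem_range.2 (ZMod.val_lt a), ?_⟩
    rw [← ZMod.isUnit_iff_coprime, ZMod.natCast_zmod_val]
    exact hu
  · intro a ha
    refine Finset.mem_filter.2 ⟨Finset.mem_univ _, ?_⟩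
    rw [ZMod.isUnit_iff_coprime]
    exact (Finset.mem_filter.1 ha).2
  · intro a _
    exact ZMod.natCast_zmod_val a
  · intro a ha
    exact ZMod.val_cast_of_lt (Finset.mem_range.1 (Finset.mem_filter.1 ha).1)
  · intro a _
    rw [ZMod.natCast_zmod_val]

lemma ls_farey (D d d' a a' : ℕ) (hd : 1 ≤ d) (hdD : d ≤ D) (hd' : 1 ≤ d') (hdD' : d' ≤ D)
    (ha : a < d) (ha' : a' < d') (hc : Nat.Coprime a d) (hc' : Nat.Coprime a' d')
    (hne : ¬(d = d' ∧ a = a')) (m : ℤ) :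
    1 / ((D ^ 2 : ℕ) : ℝ) ≤ |(a : ℝ) / d - (a' : ℝ) / d' - m| := by
  have h0 : (0 : ℝ) < d := by exact_mod_cast hd
  have h0' : (0 : ℝ) < d' := by exact_mod_cast hd'
  have hz : (a : ℤ) * d' - a' * d - m * d * d' ≠ 0 := by
    intro h
    have hdd : d = d' := by
      apply Nat.dvd_antisymm
      · have h1 : (d : ℤ) ∣ a * d' := ⟨a' + m * d', by linarith⟩
        have h2 : d ∣ a * d' := by exact_mod_cast h1
        exact hc.symm.dvd_of_dvd_mul_left h2
      · have h1 : (d' : ℤ) ∣ a' * d := ⟨a - m * d, by linarith⟩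
        have h2 : d' ∣ a' * d := by exact_mod_cast h1
        exact hc'.symm.dvd_of_dvd_mul_left h2
    subst hdd
    have hdz : (d : ℤ) ≠ 0 := by exact_mod_cast (by omega : d ≠ 0)
    have h3 : (a : ℤ) - a' = m * d := by
      apply mul_right_cancel₀ hdz; linarith
    have h4 : (a : ℤ) - a' = 0 := by
      apply Int.eq_zero_of_abs_lt_dvd (m := (d : ℤ)) ⟨m, by linarith⟩
      rw [abs_lt]; omega
    exact hne ⟨rfl, by omega⟩
  have hz1 : (1 : ℝ) ≤ |(a : ℝ) * d' - a' * d - m * d * d'| := by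
    exact_mod_cast Int.one_le_abs hz
  have e : (a : ℝ) / d - (a' : ℝ) / d' - m = ((a : ℝ) * d' - a' * d - m * d * d') / (d * d') := by
    field_simp
  rw [e, abs_div, abs_of_pos (mul_pos h0 h0')]
  refine div_le_div₀ (abs_nonneg _) hz1 (by positivity) ?_
  have : d * d' ≤ D ^ 2 := by rw [sq]; exact Nat.mul_le_mul hdD hdD'
  exact_mod_cast this

/-- Bombieri–Davenport multiplicative large sieve inequality: for `D, N ≥ 1` and complex
numbers `γ_n`,
`∑_{d ≤ D} (d/φ(d)) ∑*_{χ mod d} |∑_{n ≤ N} γ_n χ(n)|² ≪ (D² + N) ∑_{n ≤ N} |γ_n|²`,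
where `∑*` is over primitive Dirichlet characters mod `d`, with an absolute constant. -/
theorem stmt_11 :
    ∃ C : ℝ, 0 < C ∧ ∀ (D N : ℕ), 1 ≤ D → 1 ≤ N → ∀ γ : ℕ → ℂ,
      ∑ d ∈ Finset.Icc 1 D, ((d : ℝ) / (Nat.totient d : ℝ)) *
        ∑ χ ∈ Finset.univ.filter (fun χ : DirichletCharacter ℂ d => χ.IsPrimitive),
          ‖∑ n ∈ Finset.Icc 1 N, γ n * χ (n : ZMod d)‖ ^ 2 ≤
      C * ((D : ℝ) ^ 2 + (N : ℝ)) * ∑ n ∈ Finset.Icc 1 N, ‖γ n‖ ^ 2 := by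
  refine ⟨16, by norm_num, ?_⟩
  intro D N hD hN γ
  let s : Finset (Σ _ : ℕ, ℕ) := (Finset.Icc 1 D).sigma
    (fun d => (Finset.range d).filter (fun a => Nat.Coprime a d))
  have key := ls_additive s (fun p => (p.2 : ℝ) / p.1) (D ^ 2 + N) (D ^ 2) N
    (Nat.one_le_pow _ _ hD) (by omega) (by omega) (by
      rintro ⟨d, a⟩ hi ⟨d', a'⟩ hj hne m
      simp only [s, Finset.mem_sigma, Finset.mem_Icc, Finset.mem_filter, Finset.mem_range] at hi hj
      refine ls_farey D d d' a a' hi.1.1 hi.1.2 hj.1.1 hj.1.2 hi.2.1 hj.2.1 hi.2.2 hj.2.2 ?_ m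
      rintro ⟨rfl, rfl⟩
      exact hne rfl) γ
  push_cast at key
  refine le_trans ?_ key
  rw [Finset.sum_sigma]
  refine Finset.sum_le_sum fun d hd => ?_
  haveI : NeZero d := ⟨by have := (Finset.mem_Icc.1 hd).1; omega⟩
  have h := ls_char (d := d) N γ
  rw [ls_units_sum] at h
  simp_rw [ls_std] at h
  convert h using 3
end
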